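/- Let α, a, b be complex numbers such that none of α+a, α−a, α+b, α−b is a nonpositive integer. Then ∑_{k=0}^∞ (k+α)/(((k+α)² − a²)((k+α)² − b²)) = (1/2) ∑_{n=1}^∞ (−1)^{n−1} · (1+a+b)_{n−1}(1+a−b)_{n−1}(1−a+b)_{n−1}(1−a−b)_{n−1} · (5n² − 6n(1−α) + 2(1−α)² − a² − b²) / (n · C(2n, n) · (α+a)_n (α−a)_n (α+b)_n (α−b)_n). -/

import Mathlib

/-!
The proof is a WZ-type telescoping. With `x = α + k`, `D y = (y² - a²)(y² - b²)` and
`h n k = c n / ∏_{j ≤ n} D (x + j)`, where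
`c n = (-1)^n (1+a+b)_n (1+a-b)_n (1-a+b)_n (1-a-b)_n / (2 C(2n,n))`, put
`F n k = h n k (2x + n)` and `G n k = h n k P(n+1, x) / (4n + 2)`, where `P` is the quadratic factor
of the right-hand series. Then (`wzF_sub_wzF`)
`F n k - F (n+1) k = G n k - G n (k+1)`,
the series over `k` of `F 0 k` is the left-hand side, and `G n 0` is the `n`-th term on the right.

Summing over `k` gives `S n - S (n+1) = G n 0` for `S n = ∑ₖ F n k`, so it remains to see that
`S n → 0` and that `∑ G n 0` converges. Both follow from the bound
`‖h n k‖ ≤ C 2⁻ⁿ / ‖D (α + k)‖`, uniform in `k` (`exists_wzH_bound`): the quotient `h (n+1) k / h n k`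
is, uniformly in `k`, eventually at most `1/2` in norm.
-/

/-- Pochhammer symbol `(x)_n = x (x+1) ⋯ (x+n-1)`. -/
noncomputable def poch (x : ℂ) (n : ℕ) : ℂ := ∏ i ∈ Finset.range n, (x + i)

open Filter Topology

/-- The denominator `((α+m)² - a²)((α+m)² - b²)` of the left-hand series. -/
noncomputable def wzD (α a b : ℂ) (m : ℕ) : ℂ :=
  ((α + m) ^ 2 - a ^ 2) * ((α + m) ^ 2 - b ^ 2)

/-- The coefficient `(-1)^n (1+a+b)_n (1+a-b)_n (1-a+b)_n (1-a-b)_n / (2 C(2n,n))`. -/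
noncomputable def wzC (a b : ℂ) (n : ℕ) : ℂ :=
  (-1 : ℂ) ^ n * (poch (1 + a + b) n * poch (1 + a - b) n * poch (1 - a + b) n *
    poch (1 - a - b) n) / (2 * (Nat.centralBinom n : ℂ))

/-- The common hypergeometric factor of the two members of the WZ pair. -/
noncomputable def wzH (α a b : ℂ) (n k : ℕ) : ℂ :=
  wzC a b n / ∏ j ∈ Finset.range (n + 1), wzD α a b (k + j)

/-- The quadratic factor of the right-hand series, with `N` the summation index starting at `1`
and the shift `α` replaced by a variable `x`. -/
noncomputable def wzP (a b N x : ℂ) : ℂ :=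
  5 * N ^ 2 - 6 * N * (1 - x) + 2 * (1 - x) ^ 2 - a ^ 2 - b ^ 2

/-- The member of the WZ pair that is summed over `k`. -/
noncomputable def wzF (α a b : ℂ) (n k : ℕ) : ℂ := wzH α a b n k * (2 * (α + k) + n)

/-- The member of the WZ pair that is summed over `n`. -/
noncomputable def wzG (α a b : ℂ) (n k : ℕ) : ℂ :=
  wzH α a b n k * wzP a b (n + 1) (α + k) / (4 * n + 2)

/-- The quotient `c (n+1) / c n`. -/
noncomputable def wzR (a b : ℂ) (n : ℕ) : ℂ :=
  -((n + 1 + a + b) * (n + 1 + a - b) * (n + 1 - a + b) * (n + 1 - a - b) * (n + 1)) /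
    (2 * (2 * n + 1))

lemma two_mul_add_one_ne (n : ℕ) : (2 * (n : ℂ) + 1) ≠ 0 := by
  exact_mod_cast (by omega : 2 * n + 1 ≠ 0)

lemma centralBinom_succ_cast (n : ℕ) :
    ((n : ℂ) + 1) * (Nat.centralBinom (n + 1) : ℂ) = 2 * (2 * n + 1) * Nat.centralBinom n := by
  exact_mod_cast Nat.succ_mul_centralBinom_succ n

lemma wzC_succ (a b : ℂ) (n : ℕ) : wzC a b (n + 1) = wzC a b n * wzR a b n := by
  have h := centralBinom_succ_cast n
  have h0 : (Nat.centralBinom n : ℂ) ≠ 0 := by exact_mod_cast Nat.centralBinom_ne_zero n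
  have hn : (n : ℂ) + 1 ≠ 0 := by exact_mod_cast Nat.succ_ne_zero n
  have h2 := two_mul_add_one_ne n
  have h3 : (Nat.centralBinom (n + 1) : ℂ) = 2 * (2 * n + 1) * Nat.centralBinom n / (n + 1) := by
    rw [eq_div_iff hn, ← h]; ring
  unfold wzC wzR
  rw [h3]
  simp only [poch, Finset.prod_range_succ, pow_succ]
  field_simp
  ring

lemma wzH_succ_left (α a b : ℂ) (n k : ℕ) :
    wzH α a b (n + 1) k = wzH α a b n k * wzR a b n / wzD α a b (k + (n + 1)) := by
  unfold wzH
  rw [Finset.prod_range_succ _ (n + 1), wzC_succ, div_mul_eq_mul_div, div_div]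

lemma wzH_succ_right (α a b : ℂ) (hd : ∀ m, wzD α a b m ≠ 0) (n k : ℕ) :
    wzH α a b n (k + 1) = wzH α a b n k * wzD α a b k / wzD α a b (k + (n + 1)) := by
  have hp : (∏ j ∈ Finset.range (n + 1), wzD α a b (k + 1 + j)) * wzD α a b k =
      (∏ j ∈ Finset.range (n + 1), wzD α a b (k + j)) * wzD α a b (k + (n + 1)) := by
    rw [← Finset.prod_range_succ (fun j => wzD α a b (k + j)),
      Finset.prod_range_succ' _ (n + 1)]
    simp only [add_zero]
    congr 1
    exact Finset.prod_congr rfl fun j _ => by rw [add_assoc, add_comm 1 j]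
  have h1 : (∏ j ∈ Finset.range (n + 1), wzD α a b (k + 1 + j)) ≠ 0 :=
    Finset.prod_ne_zero_iff.2 fun j _ => hd _
  have h2 : (∏ j ∈ Finset.range (n + 1), wzD α a b (k + j)) ≠ 0 :=
    Finset.prod_ne_zero_iff.2 fun j _ => hd _
  unfold wzH
  rw [div_mul_eq_mul_div, div_div, div_eq_div_iff h1 (mul_ne_zero h2 (hd _)), ← hp]
  ring

lemma wzF_sub_wzF (α a b : ℂ) (hd : ∀ m, wzD α a b m ≠ 0) (n k : ℕ) :
    wzF α a b n k - wzF α a b (n + 1) k = wzG α a b n k - wzG α a b n (k + 1) := by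
  have h2 := two_mul_add_one_ne n
  have h4 : 4 * (n : ℂ) + 2 = 2 * (2 * n + 1) := by ring
  unfold wzF wzG
  rw [wzH_succ_left, wzH_succ_right α a b hd, h4]
  have hD := hd (k + (n + 1))
  -- the polynomial identity behind the WZ pair, up to the common factor `wzH`
  have key : (2 * (α + k) + n) * wzD α a b (k + (n + 1)) - wzR a b n * (2 * (α + k) + (n + 1)) =
      (wzP a b (n + 1) (α + k) * wzD α a b (k + (n + 1)) -
        wzP a b (n + 1) (α + (k + 1)) * wzD α a b k) / (2 * (2 * n + 1)) := by
    unfold wzR wzP wzD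
    push_cast
    field_simp
    ring
  have e : wzH α a b n k * (2 * (α + k) + n) -
      wzH α a b n k * wzR a b n / wzD α a b (k + (n + 1)) * (2 * (α + k) + (n + 1)) =
      wzH α a b n k / wzD α a b (k + (n + 1)) * ((2 * (α + k) + n) * wzD α a b (k + (n + 1))
        - wzR a b n * (2 * (α + k) + (n + 1))) := by
    field_simp
  push_cast
  rw [e, key]
  field_simp

/-- A weight dominating `1 / ‖D‖`, `‖x‖ / ‖D‖` and `‖x‖² / ‖D‖` at once, where `x = α + k`. -/
noncomputable def wzW (α a b : ℂ) (k : ℕ) : ℝ := (2 * ‖α + k‖ + 1) ^ 2 / ‖wzD α a b k‖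

lemma wzD_factor (α a b : ℂ) (m : ℕ) :
    wzD α a b m = (α + m + a) * (α + m - a) * ((α + m + b) * (α + m - b)) := by
  unfold wzD; ring

lemma le_norm_nat_add (z : ℂ) (m : ℕ) {A : ℝ} (hz : ‖z‖ ≤ A) : (m : ℝ) - A ≤ ‖(m : ℂ) + z‖ := by
  have := norm_sub_le_norm_add (m : ℂ) z
  rw [Complex.norm_natCast] at this
  linarith

/-- `A` is any bound for `‖α‖ + ‖a‖ + ‖b‖`. -/
lemma le_norm_wzD (α a b : ℂ) {A : ℝ} (hA : ‖α‖ + ‖a‖ + ‖b‖ ≤ A) (m : ℕ) (hm : A ≤ m) :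
    ((m : ℝ) - A) ^ 4 ≤ ‖wzD α a b m‖ := by
  have h0 : 0 ≤ (m : ℝ) - A := by linarith
  have na := norm_nonneg a
  have nb := norm_nonneg b
  have e1 : (m : ℝ) - A ≤ ‖α + m + a‖ := by
    rw [show α + m + a = m + (α + a) by ring]
    exact le_norm_nat_add _ _ (by linarith [norm_add_le α a])
  have e2 : (m : ℝ) - A ≤ ‖α + m - a‖ := by
    rw [show α + m - a = m + (α - a) by ring]
    exact le_norm_nat_add _ _ (by linarith [norm_sub_le α a])
  have e3 : (m : ℝ) - A ≤ ‖α + m + b‖ := by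
    rw [show α + m + b = m + (α + b) by ring]
    exact le_norm_nat_add _ _ (by linarith [norm_add_le α b])
  have e4 : (m : ℝ) - A ≤ ‖α + m - b‖ := by
    rw [show α + m - b = m + (α - b) by ring]
    exact le_norm_nat_add _ _ (by linarith [norm_sub_le α b])
  rw [wzD_factor, norm_mul, norm_mul, norm_mul]
  calc ((m : ℝ) - A) ^ 4 = ((m - A) * (m - A)) * ((m - A) * (m - A)) := by ring
    _ ≤ _ := by gcongr

lemma wzW_nonneg (α a b : ℂ) (k : ℕ) : 0 ≤ wzW α a b k := by unfold wzW; positivity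

lemma summable_wzW (α a b : ℂ) : Summable (wzW α a b) := by
  set A := ‖α‖ + ‖a‖ + ‖b‖ with hA
  have hs : Summable fun k : ℕ => 400 * (1 / (k : ℝ) ^ 2) :=
    (Real.summable_one_div_nat_pow.2 one_lt_two).mul_left _
  refine Summable.of_norm_bounded_eventually_nat hs ?_
  filter_upwards [eventually_ge_atTop (⌈2 * A + 1⌉₊)] with k hk
  have hk' : 2 * A + 1 ≤ k := Nat.ceil_le.1 hk
  have hA0 : 0 ≤ A := by positivity
  rw [Real.norm_of_nonneg (wzW_nonneg α a b k)]
  have hkp : (0 : ℝ) < k := by linarith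
  have hx : ‖α + k‖ ≤ 2 * k := by
    have := norm_add_le α (k : ℂ)
    rw [Complex.norm_natCast] at this
    have := norm_nonneg a
    have := norm_nonneg b
    linarith
  have hD : ((k : ℝ) / 2) ^ 4 ≤ ‖wzD α a b k‖ := by
    refine le_trans ?_ (le_norm_wzD α a b hA.ge k (by linarith))
    gcongr
    linarith
  unfold wzW
  calc (2 * ‖α + k‖ + 1) ^ 2 / ‖wzD α a b k‖ ≤ (5 * k) ^ 2 / ((k : ℝ) / 2) ^ 4 := by
        gcongr
        linarith
    _ = 400 * (1 / (k : ℝ) ^ 2) := by field_simp; norm_num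

lemma inv_norm_wzD_le (α a b : ℂ) (k : ℕ) : ‖wzD α a b k‖⁻¹ ≤ ∑' m, wzW α a b m := by
  refine le_trans ?_ ((summable_wzW α a b).le_tsum k fun j _ => wzW_nonneg α a b j)
  unfold wzW
  rw [div_eq_mul_inv]
  refine le_mul_of_one_le_left (by positivity) (one_le_pow₀ ?_)
  linarith [norm_nonneg (α + k)]

/-- For large `n` the quotient of consecutive `wzH` is at most `1/2`, uniformly in `k`. -/
lemma exists_ratio_bound (α a b : ℂ) : ∃ n₀ : ℕ, ∀ n ≥ n₀, ∀ k,
    ‖wzR a b n‖ * ‖wzD α a b (k + (n + 1))‖⁻¹ ≤ 1 / 2 := by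
  set A := ‖α‖ + ‖a‖ + ‖b‖ with hA
  have hA0 : 0 ≤ A := by positivity
  refine ⟨⌈21 * A + 1⌉₊, fun n hn k => ?_⟩
  have hn' : 21 * A + 1 ≤ n := Nat.ceil_le.1 hn
  have hk0 : (0 : ℝ) ≤ k := Nat.cast_nonneg k
  have hn0 : (1 : ℝ) ≤ n := by linarith
  set N : ℝ := n + 1 with hN
  have hD : (N - A) ^ 4 ≤ ‖wzD α a b (k + (n + 1))‖ := by
    refine le_trans ?_ (le_norm_wzD α a b hA.ge (k + (n + 1)) (by push_cast; linarith))
    push_cast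
    gcongr
    · linarith
    · linarith
  have nN : ‖(n : ℂ) + 1‖ = N := by
    rw [hN]; exact_mod_cast Complex.norm_natCast (n + 1)
  have n21 : ‖(2 : ℂ) * (2 * n + 1)‖ = 2 * (2 * N - 1) := by
    rw [hN, show (2 : ℂ) * (2 * n + 1) = ((2 * (2 * n + 1) : ℕ) : ℂ) by push_cast; ring,
      Complex.norm_natCast]
    push_cast; ring
  have nα := norm_nonneg α
  have hf : ∀ s t : ℂ, ‖s‖ = ‖a‖ → ‖t‖ = ‖b‖ → ‖(n : ℂ) + 1 + s + t‖ ≤ 1.1 * (N - A) := by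
    intro s t hs ht
    have h1 := norm_add_le ((n : ℂ) + 1 + s) t
    have h2 := norm_add_le ((n : ℂ) + 1) s
    rw [nN] at h2
    linarith
  have f1 := hf a b rfl rfl
  have f2 := hf a (-b) rfl (norm_neg b)
  have f3 := hf (-a) b (norm_neg a) rfl
  have f4 := hf (-a) (-b) (norm_neg a) (norm_neg b)
  simp only [← sub_eq_add_neg] at f2 f3 f4
  have hNA : 0 < N - A := by linarith
  have hR : ‖wzR a b n‖ ≤ (1.1 * (N - A)) ^ 4 * (1 / 3) := by
    unfold wzR
    rw [norm_div, norm_neg, norm_mul, norm_mul, norm_mul, norm_mul, nN, n21, mul_div_assoc]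
    have hq : N / (2 * (2 * N - 1)) ≤ 1 / 3 := by
      rw [div_le_div_iff₀ (by linarith) (by norm_num)]
      linarith
    have hq0 : 0 ≤ N / (2 * (2 * N - 1)) := div_nonneg (by linarith) (by linarith)
    calc _ ≤ (1.1 * (N - A)) * (1.1 * (N - A)) * (1.1 * (N - A)) * (1.1 * (N - A)) * (1 / 3) := by
          gcongr
      _ = _ := by ring
  calc ‖wzR a b n‖ * ‖wzD α a b (k + (n + 1))‖⁻¹
      ≤ ((1.1 * (N - A)) ^ 4 * (1 / 3)) * ((N - A) ^ 4)⁻¹ := by gcongr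
    _ = 1.1 ^ 4 * (1 / 3) := by field_simp
    _ ≤ 1 / 2 := by norm_num

lemma exists_wzH_bound (α a b : ℂ) : ∃ C : ℝ, 0 ≤ C ∧ ∀ n k,
    ‖wzH α a b n k‖ ≤ C * (1 / 2) ^ n * ‖wzD α a b k‖⁻¹ := by
  obtain ⟨n₀, hn₀⟩ := exists_ratio_bound α a b
  have hstep : ∀ n k, ‖wzH α a b (n + 1) k‖ =
      ‖wzH α a b n k‖ * (‖wzR a b n‖ * ‖wzD α a b (k + (n + 1))‖⁻¹) := by
    intro n k
    rw [wzH_succ_left, norm_div, norm_mul, div_eq_mul_inv, mul_assoc]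
  set B := ∑' m, wzW α a b m with hB
  have hB0 : 0 ≤ B := tsum_nonneg (wzW_nonneg α a b)
  -- finitely many `n`: each new factor `1 / D` is bounded in `k`
  have hfin : ∀ M : ℕ, ∃ C : ℝ, 0 ≤ C ∧ ∀ n ≤ M, ∀ k,
      ‖wzH α a b n k‖ ≤ C * (1 / 2) ^ n * ‖wzD α a b k‖⁻¹ := by
    intro M
    induction M with
    | zero =>
      refine ⟨‖wzC a b 0‖, norm_nonneg _, fun n hn k => ?_⟩
      obtain rfl : n = 0 := by omega
      simp [wzH, div_eq_mul_inv]
    | succ M ih =>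
      obtain ⟨C, hC, h⟩ := ih
      refine ⟨max C (2 * C * (‖wzR a b M‖ * B)), le_max_of_le_left hC, fun n hn k => ?_⟩
      rcases Nat.lt_or_ge M n with h1 | h1
      · obtain rfl : n = M + 1 := by omega
        rw [hstep]
        calc _ ≤ (C * (1 / 2) ^ M * ‖wzD α a b k‖⁻¹) * (‖wzR a b M‖ * B) := by
              gcongr
              · exact h M le_rfl k
              · exact inv_norm_wzD_le α a b _
          _ = (2 * C * (‖wzR a b M‖ * B)) * (1 / 2) ^ (M + 1) * ‖wzD α a b k‖⁻¹ := by
              rw [pow_succ]; ring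
          _ ≤ _ := by gcongr; exact le_max_right _ _
      · refine (h n h1 k).trans ?_
        gcongr
        exact le_max_left _ _
  obtain ⟨C, hC, h⟩ := hfin n₀
  refine ⟨C, hC, fun n k => ?_⟩
  rcases le_total n n₀ with h1 | h1
  · exact h n h1 k
  · induction n, h1 using Nat.le_induction with
    | base => exact h n₀ le_rfl k
    | succ n hn ih =>
      rw [hstep]
      calc _ ≤ (C * (1 / 2) ^ n * ‖wzD α a b k‖⁻¹) * (1 / 2) := by
            gcongr
            exact hn₀ n hn k
        _ = _ := by rw [pow_succ]; ring

lemma norm_wzP_le (a b x : ℂ) (n : ℕ) :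
    ‖wzP a b (n + 1) x‖ ≤ (25 + ‖a‖ ^ 2 + ‖b‖ ^ 2) * ((n : ℝ) + 1) ^ 2 * (2 * ‖x‖ + 1) ^ 2 := by
  have nN : ‖(n : ℂ) + 1‖ = (n : ℝ) + 1 := by exact_mod_cast Complex.norm_natCast (n + 1)
  have hN : (1 : ℝ) ≤ (n : ℝ) + 1 := by linarith [(Nat.cast_nonneg n : (0 : ℝ) ≤ n)]
  have h1 : ‖1 - x‖ ≤ 2 * ‖x‖ + 1 := by
    have := norm_sub_le 1 x
    rw [norm_one] at this
    linarith [norm_nonneg x]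
  have hX : 1 ≤ 2 * ‖x‖ + 1 := by linarith [norm_nonneg x]
  set X := 2 * ‖x‖ + 1
  set N := (n : ℝ) + 1
  have e : ‖wzP a b (n + 1) x‖ ≤ 5 * N ^ 2 + 6 * N * ‖1 - x‖ + 2 * ‖1 - x‖ ^ 2 + ‖a‖ ^ 2 + ‖b‖ ^ 2 := by
    unfold wzP
    refine (norm_sub_le _ _).trans (add_le_add ((norm_sub_le _ _).trans (add_le_add
      ((norm_add_le _ _).trans (add_le_add ((norm_sub_le _ _).trans (add_le_add ?_ ?_)) ?_)) ?_)) ?_)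
    all_goals simp [nN]
  have hNX : N * X ≤ N ^ 2 * X ^ 2 := by
    have : 1 ≤ N * X := one_le_mul_of_one_le_of_one_le hN hX
    nlinarith
  have hN2 : 1 ≤ N ^ 2 := one_le_pow₀ hN
  have hX2 : 1 ≤ X ^ 2 := one_le_pow₀ hX
  have g1 : N ^ 2 ≤ N ^ 2 * X ^ 2 := le_mul_of_one_le_right (by positivity) hX2
  have g2 : X ^ 2 ≤ N ^ 2 * X ^ 2 := le_mul_of_one_le_left (by positivity) hN2
  have g3 : 1 ≤ N ^ 2 * X ^ 2 := hN2.trans g1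
  have k1 : N * ‖1 - x‖ ≤ N * X := by gcongr
  have k2 : ‖1 - x‖ ^ 2 ≤ X ^ 2 := by gcongr
  have k3 := le_mul_of_one_le_right (by positivity : 0 ≤ ‖a‖ ^ 2) g3
  have k4 := le_mul_of_one_le_right (by positivity : 0 ≤ ‖b‖ ^ 2) g3
  nlinarith

lemma exists_wz_bounds (α a b : ℂ) : ∃ C : ℝ, ∀ n k,
    ‖wzF α a b n k‖ ≤ C * (((n : ℝ) + 1) ^ 2 * (1 / 2) ^ n) * wzW α a b k ∧
    ‖wzG α a b n k‖ ≤ C * (((n : ℝ) + 1) ^ 2 * (1 / 2) ^ n) * wzW α a b k := by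
  obtain ⟨C, hC, h⟩ := exists_wzH_bound α a b
  refine ⟨C * (25 + ‖a‖ ^ 2 + ‖b‖ ^ 2), fun n k => ?_⟩
  have hn0 : (0 : ℝ) ≤ n := Nat.cast_nonneg n
  have hx0 := norm_nonneg (α + k)
  have hlin : ‖2 * (α + k) + n‖ ≤
      (25 + ‖a‖ ^ 2 + ‖b‖ ^ 2) * ((n : ℝ) + 1) ^ 2 * (2 * ‖α + k‖ + 1) ^ 2 := by
    have h1 : ‖2 * (α + k) + n‖ ≤ 2 * ‖α + k‖ + n := by
      simpa using norm_add_le (2 * (α + k)) (n : ℂ)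
    have h2 : 2 * ‖α + k‖ + n ≤ ((n : ℝ) + 1) * (2 * ‖α + k‖ + 1) := by nlinarith
    have h3 : 1 ≤ ((n : ℝ) + 1) * (2 * ‖α + k‖ + 1) :=
      one_le_mul_of_one_le_of_one_le (by linarith) (by linarith)
    have h4 : ((n : ℝ) + 1) * (2 * ‖α + k‖ + 1) ≤ (((n : ℝ) + 1) * (2 * ‖α + k‖ + 1)) ^ 2 := by
      nlinarith
    have h5 : (((n : ℝ) + 1) * (2 * ‖α + k‖ + 1)) ^ 2 ≤
        (25 + ‖a‖ ^ 2 + ‖b‖ ^ 2) * (((n : ℝ) + 1) * (2 * ‖α + k‖ + 1)) ^ 2 :=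
      le_mul_of_one_le_left (by positivity) (by nlinarith [sq_nonneg ‖a‖, sq_nonneg ‖b‖])
    rw [mul_assoc, ← mul_pow]
    linarith
  have main : ∀ z : ℂ, ‖z‖ ≤
      (25 + ‖a‖ ^ 2 + ‖b‖ ^ 2) * ((n : ℝ) + 1) ^ 2 * (2 * ‖α + k‖ + 1) ^ 2 →
      ‖wzH α a b n k * z‖ ≤ C * (25 + ‖a‖ ^ 2 + ‖b‖ ^ 2) * (((n : ℝ) + 1) ^ 2 * (1 / 2) ^ n) *
        wzW α a b k := by
    intro z hz
    rw [norm_mul]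
    calc _ ≤ (C * (1 / 2) ^ n * ‖wzD α a b k‖⁻¹) *
          ((25 + ‖a‖ ^ 2 + ‖b‖ ^ 2) * ((n : ℝ) + 1) ^ 2 * (2 * ‖α + k‖ + 1) ^ 2) := by
          gcongr
          exact h n k
      _ = _ := by unfold wzW; rw [div_eq_mul_inv]; ring
  refine ⟨main _ hlin, ?_⟩
  unfold wzG
  rw [norm_div]
  refine (div_le_self (norm_nonneg _) ?_).trans (main _ (norm_wzP_le a b _ n))
  rw [show (4 : ℂ) * n + 2 = ((4 * n + 2 : ℕ) : ℂ) by push_cast; ring, Complex.norm_natCast]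
  push_cast
  linarith

lemma summable_sq_mul_half : Summable fun n : ℕ => ((n : ℝ) + 1) ^ 2 * (1 / 2 : ℝ) ^ n := by
  have h := (summable_nat_add_iff 1).2
    (summable_pow_mul_geometric_of_norm_lt_one (R := ℝ) 2 (r := 1 / 2) (by norm_num))
  refine (h.mul_left 2).congr fun n => ?_
  push_cast
  rw [pow_succ]
  ring

lemma tsum_wzF_zero (α a b : ℂ) (hd : ∀ m, wzD α a b m ≠ 0) :
    ∑' k, wzF α a b 0 k = ∑' n, wzG α a b n 0 := by
  obtain ⟨C, hC⟩ := exists_wz_bounds α a b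
  have hW := summable_wzW α a b
  have hF : ∀ n, Summable (wzF α a b n) := fun n =>
    Summable.of_norm_bounded (hW.mul_left _) fun k => (hC n k).1
  have hG0 : ∀ n, Tendsto (wzG α a b n) atTop (𝓝 0) := fun n =>
    squeeze_zero_norm (fun k => (hC n k).2) (by simpa using (hW.mul_left _).tendsto_atTop_zero)
  have hG : Summable fun n => wzG α a b n 0 :=
    Summable.of_norm_bounded ((summable_sq_mul_half.mul_left C).mul_right (wzW α a b 0))
      fun n => (hC n 0).2
  have hS : ∀ n, ∑' k, wzF α a b n k - ∑' k, wzF α a b (n + 1) k = wzG α a b n 0 := by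
    intro n
    rw [← (hF n).tsum_sub (hF (n + 1))]
    have t1 := ((hF n).sub (hF (n + 1))).hasSum.tendsto_sum_nat
    refine tendsto_nhds_unique t1 ?_
    simp only [wzF_sub_wzF α a b hd, Finset.sum_range_sub']
    simpa using (hG0 n).const_sub (wzG α a b n 0)
  have hS0 : Tendsto (fun n => ∑' k, wzF α a b n k) atTop (𝓝 0) := by
    refine squeeze_zero_norm (a := fun n : ℕ =>
      C * (((n : ℝ) + 1) ^ 2 * (1 / 2) ^ n) * ∑' k, wzW α a b k) (fun n => ?_) ?_
    · exact tsum_of_norm_bounded (hW.hasSum.mul_left _) fun k => (hC n k).1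
    · simpa using ((summable_sq_mul_half.mul_left C).mul_right _).tendsto_atTop_zero
  have t2 := hG.hasSum.tendsto_sum_nat
  refine tendsto_nhds_unique ?_ t2
  simp only [← hS, Finset.sum_range_sub' (fun n => ∑' k, wzF α a b n k)]
  simpa using hS0.const_sub (∑' k, wzF α a b 0 k)

lemma prod_wzD (α a b : ℂ) (n : ℕ) : ∏ j ∈ Finset.range n, wzD α a b (0 + j) =
    poch (α + a) n * poch (α - a) n * poch (α + b) n * poch (α - b) n := by
  unfold poch
  simp only [← Finset.prod_mul_distrib]
  refine Finset.prod_congr rfl fun j _ => ?_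
  rw [zero_add, wzD_factor]
  ring

theorem stmt11 (α a b : ℂ)
    (h1 : ∀ k : ℕ, α + a ≠ -(k : ℂ)) (h2 : ∀ k : ℕ, α - a ≠ -(k : ℂ))
    (h3 : ∀ k : ℕ, α + b ≠ -(k : ℂ)) (h4 : ∀ k : ℕ, α - b ≠ -(k : ℂ)) :
    ∑' k : ℕ,
        ((k : ℂ) + α) / ((((k : ℂ) + α) ^ 2 - a ^ 2) * (((k : ℂ) + α) ^ 2 - b ^ 2))
      = (1 / 2) * ∑' n : ℕ,
          (-1 : ℂ) ^ n *
            (poch (1 + a + b) n * poch (1 + a - b) n * poch (1 - a + b) n *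
              poch (1 - a - b) n) *
            (5 * ((n : ℂ) + 1) ^ 2 - 6 * ((n : ℂ) + 1) * (1 - α) + 2 * (1 - α) ^ 2 -
              a ^ 2 - b ^ 2) /
            (((n : ℂ) + 1) * (Nat.choose (2 * (n + 1)) (n + 1) : ℂ) *
              poch (α + a) (n + 1) * poch (α - a) (n + 1) * poch (α + b) (n + 1) *
              poch (α - b) (n + 1)) := by
  have hd : ∀ m, wzD α a b m ≠ 0 := by
    intro m
    rw [wzD_factor]
    refine mul_ne_zero (mul_ne_zero ?_ ?_) (mul_ne_zero ?_ ?_)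
    · exact fun h => h1 m (by linear_combination h)
    · exact fun h => h2 m (by linear_combination h)
    · exact fun h => h3 m (by linear_combination h)
    · exact fun h => h4 m (by linear_combination h)
  rw [← tsum_mul_left]
  refine (tsum_congr fun k => ?_).trans ((tsum_wzF_zero α a b hd).trans (tsum_congr fun n => ?_))
  · simp only [wzF, wzH, wzC, wzD, poch, zero_add, Finset.prod_range_one, Finset.prod_range_zero,
      Nat.centralBinom_zero, pow_zero, mul_one, add_zero, Nat.cast_one, Nat.cast_zero]
    rw [add_comm (k : ℂ) α]
    ring
  · symm
    unfold wzG wzH wzC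
    rw [prod_wzD, ← Nat.centralBinom_eq_two_mul_choose, centralBinom_succ_cast]
    have h0 : (Nat.centralBinom n : ℂ) ≠ 0 := by exact_mod_cast Nat.centralBinom_ne_zero n
    have hn := two_mul_add_one_ne n
    have hp := prod_wzD α a b (n + 1)
    have hp0 : (∏ j ∈ Finset.range (n + 1), wzD α a b (0 + j)) ≠ 0 :=
      Finset.prod_ne_zero_iff.2 fun j _ => hd _
    rw [show (4 : ℂ) * n + 2 = 2 * (2 * n + 1) by ring]
    unfold wzP
    rw [Nat.cast_zero, add_zero]
    simp only [mul_assoc] at hp ⊢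
    rw [← hp]
    field_simp
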